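/- With 𝒢 as above, there exist constants c₄ > c₃ > 0 and c₃* > 0, all independent of α, such that for s₀ = 2 c₃* α^σ and all s ∈ (0, s₀]: c₃ α^{3/(3+2σ)} s^{−(1+2σ)/(3+2σ)} ≤ 𝒢''(s) ≤ c₄ α^{3/(3+2σ)} s^{−(1+2σ)/(3+2σ)}. -/

import Mathlib

/-- `G(ε) = ∫₀^∞ ξ² (max(α − ε√(1+ξ²), 0))^{σ+1} dξ` (for `ε > 0`). -/
noncomputable def Gfun (σ α ε : ℝ) : ℝ :=
  ∫ ξ in Set.Ioi (0:ℝ), ξ ^ 2 * (max (α - ε * Real.sqrt (1 + ξ ^ 2)) 0) ^ (σ + 1)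

/-- `G'(ε) = −(σ+1) ∫₀^∞ ξ² √(1+ξ²) (max(α − ε√(1+ξ²), 0))^σ dξ`. -/
noncomputable def GderivFun (σ α ε : ℝ) : ℝ :=
  -(σ + 1) * ∫ ξ in Set.Ioi (0:ℝ),
    ξ ^ 2 * Real.sqrt (1 + ξ ^ 2) * (max (α - ε * Real.sqrt (1 + ξ ^ 2)) 0) ^ σ

/-- Legendre transform of `G`, the supremum being taken over `ε > 0`. -/
noncomputable def GhatFun (σ α u : ℝ) : ℝ :=
  sSup {y : ℝ | ∃ ε : ℝ, 0 < ε ∧ y = ε * u - Gfun σ α ε}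

/-- `𝒢(s) = Ĝ(−s)`. -/
noncomputable def calG (σ α s : ℝ) : ℝ := GhatFun σ α (-s)

open MeasureTheory Set Filter Topology

/-- Weight on `(0, 1]` in the rescaled form of `G'`. -/
noncomputable def endpointWeight (σ x : ℝ) : ℝ := √x * (max (1 - x) 0) ^ σ

/-- Regular factor of the integrand in the rescaled form of `G'`. -/
noncomputable def regularKernel (e x : ℝ) : ℝ :=
  (e + (1 - e) * x) ^ 2 * √(2 * e + (1 - e) * x)

/-- Derivative of `regularKernel` in its first variable. -/
noncomputable def regularKernelDeriv (e x : ℝ) : ℝ :=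
  2 * (e + (1 - e) * x) * (1 - x) * √(2 * e + (1 - e) * x) +
    (e + (1 - e) * x) ^ 2 * ((2 - x) / (2 * √(2 * e + (1 - e) * x)))

/-- The regular factor of `G'` at `α = 1`, after the endpoint behaviour has been split off. -/
noncomputable def regularFactor (σ e : ℝ) : ℝ :=
  ∫ x in Ioc (0:ℝ) 1, regularKernel e x * endpointWeight σ x

/-- Closed form of `-G'` on `(0, 1)` for `α = 1`. -/
noncomputable def descentRate (σ e : ℝ) : ℝ :=
  (σ + 1) * ((e ^ 4)⁻¹ * (1 - e) ^ (σ + 3 / 2) * regularFactor σ e)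

lemma endpointWeight_nonneg (σ x : ℝ) : 0 ≤ endpointWeight σ x := by
  unfold endpointWeight; positivity

lemma continuous_endpointWeight {σ : ℝ} (hσ : 0 < σ) : Continuous (endpointWeight σ) := by
  unfold endpointWeight
  exact Real.continuous_sqrt.mul
    (((continuous_const.sub continuous_id).max continuous_const).rpow_const fun _ => Or.inr hσ.le)

lemma continuous_regularKernel (e : ℝ) : Continuous (regularKernel e) := by
  unfold regularKernel; fun_prop

lemma integrableOn_regularKernel_mul {σ : ℝ} (hσ : 0 < σ) (e : ℝ) :
    IntegrableOn (fun x => regularKernel e x * endpointWeight σ x) (Ioc 0 1) :=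
  (((continuous_regularKernel e).mul (continuous_endpointWeight hσ)).integrableOn_Icc).mono_set
    Ioc_subset_Icc_self

lemma regularKernel_mono {a b x : ℝ} (ha : 0 ≤ a) (hab : a ≤ b) (hx : x ∈ Ioc (0:ℝ) 1) :
    regularKernel a x ≤ regularKernel b x := by
  obtain ⟨h0, h1⟩ := hx
  unfold regularKernel
  have h2 : 0 ≤ a + (1 - a) * x := by nlinarith
  have h3 : a + (1 - a) * x ≤ b + (1 - b) * x := by nlinarith
  have h4 : 2 * a + (1 - a) * x ≤ 2 * b + (1 - b) * x := by nlinarith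
  gcongr

lemma regularFactor_mono {σ a b : ℝ} (hσ : 0 < σ) (ha : 0 ≤ a) (hab : a ≤ b) :
    regularFactor σ a ≤ regularFactor σ b := by
  refine setIntegral_mono_on (integrableOn_regularKernel_mul hσ a)
    (integrableOn_regularKernel_mul hσ b) measurableSet_Ioc fun x hx => ?_
  exact mul_le_mul_of_nonneg_right (regularKernel_mono ha hab hx) (endpointWeight_nonneg σ x)

lemma regularFactor_zero_pos {σ : ℝ} (hσ : 0 < σ) : 0 < regularFactor σ 0 := by
  have h := (integrableOn_regularKernel_mul hσ 0)
  unfold regularFactor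
  rw [setIntegral_pos_iff_support_of_nonneg_ae _ h]
  · have hs : Ioo (0:ℝ) 1 ⊆
        Function.support (fun x => regularKernel 0 x * endpointWeight σ x) ∩ Ioc 0 1 := by
      intro x hx
      refine ⟨?_, hx.1, hx.2.le⟩
      have h0 := hx.1
      have h1 : 0 < max (1 - x) 0 := lt_max_of_lt_left (sub_pos.2 hx.2)
      have h2 : 0 < regularKernel 0 x * endpointWeight σ x := by
        simp only [regularKernel, endpointWeight, zero_add, sub_zero, one_mul, mul_zero]
        positivity
      exact h2.ne'
    refine lt_of_lt_of_le ?_ (measure_mono hs)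
    simp
  · refine Eventually.of_forall fun x => ?_
    have := endpointWeight_nonneg σ x
    simp only [regularKernel, Pi.zero_apply]
    positivity

lemma regularFactor_pos {σ e : ℝ} (hσ : 0 < σ) (he : 0 ≤ e) : 0 < regularFactor σ e :=
  (regularFactor_zero_pos hσ).trans_le (regularFactor_mono hσ le_rfl he)

lemma hasDerivAt_regularKernel {e x : ℝ} (he : e ∈ Ioo (0:ℝ) 1) (hx : x ∈ Ioc (0:ℝ) 1) :
    HasDerivAt (fun y => regularKernel y x) (regularKernelDeriv e x) e := by
  obtain ⟨h0, h1⟩ := hx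
  have hu : 0 < 2 * e + (1 - e) * x := by nlinarith [he.1, he.2]
  have d1 : HasDerivAt (fun y : ℝ => y + (1 - y) * x) (1 - x) e := by
    exact ((hasDerivAt_id e).add
      (((hasDerivAt_id e).const_sub 1).mul_const x)).congr_deriv (by ring)
  have d2 : HasDerivAt (fun y : ℝ => 2 * y + (1 - y) * x) (2 - x) e := by
    exact (((hasDerivAt_id e).const_mul 2).add
      (((hasDerivAt_id e).const_sub 1).mul_const x)).congr_deriv (by ring)
  exact ((d1.pow 2).mul (d2.sqrt hu.ne')).congr_deriv (by simp [regularKernelDeriv])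

lemma regularKernelDeriv_bounds {e x : ℝ} (he : e ∈ Ioo (0:ℝ) 1) (hx : x ∈ Ioc (0:ℝ) 1) :
    0 ≤ regularKernelDeriv e x ∧ regularKernelDeriv e x ≤ 5 / (2 * e) * regularKernel e x := by
  obtain ⟨h0, h1⟩ := hx
  obtain ⟨e0, e1⟩ := he
  have hu : 0 < 2 * e + (1 - e) * x := by nlinarith
  have hv : 0 < e + (1 - e) * x := by nlinarith
  have hs : √(2 * e + (1 - e) * x) ^ 2 = 2 * e + (1 - e) * x := Real.sq_sqrt hu.le
  have hs0 : 0 < √(2 * e + (1 - e) * x) := Real.sqrt_pos.2 hu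
  unfold regularKernelDeriv regularKernel
  set s := √(2 * e + (1 - e) * x)
  have h1x : 0 ≤ 1 - x := by linarith
  have h2x : 0 ≤ 2 - x := by linarith
  refine ⟨by positivity, ?_⟩
  have b1 : 1 - x ≤ (e + (1 - e) * x) / e := by
    rw [le_div_iff₀ e0]; nlinarith
  have b2 : (2 - x) / (2 * s) ≤ s / (2 * e) := by
    rw [div_le_div_iff₀ (by positivity) (by positivity)]; nlinarith
  calc _ ≤ 2 * (e + (1 - e) * x) * ((e + (1 - e) * x) / e) * s +
        (e + (1 - e) * x) ^ 2 * (s / (2 * e)) := by gcongr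
    _ = _ := by field_simp; ring

lemma exists_hasDerivAt_regularFactor {σ e : ℝ} (hσ : 0 < σ) (he : e ∈ Ioo (0:ℝ) 1) :
    ∃ d, HasDerivAt (regularFactor σ) d e ∧ 0 ≤ d ∧ d ≤ 5 / (2 * e) * regularFactor σ e := by
  have hnhds : Ioo (e / 2) 1 ∈ 𝓝 e := Ioo_mem_nhds (by linarith [he.1]) he.2
  have hI := integrableOn_regularKernel_mul hσ 1
  have hmeas : Measurable fun x => regularKernelDeriv e x * endpointWeight σ x := by
    have := (continuous_endpointWeight hσ).measurable
    unfold regularKernelDeriv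
    fun_prop
  obtain ⟨hi, hd⟩ := hasDerivAt_integral_of_dominated_loc_of_deriv_le
    (μ := volume.restrict (Ioc (0:ℝ) 1))
    (F := fun y x => regularKernel y x * endpointWeight σ x)
    (F' := fun y x => regularKernelDeriv y x * endpointWeight σ x)
    (bound := fun x => 5 / e * (regularKernel 1 x * endpointWeight σ x)) hnhds
    (Eventually.of_forall fun y => (integrableOn_regularKernel_mul hσ y).aestronglyMeasurable)
    (integrableOn_regularKernel_mul hσ e) hmeas.aestronglyMeasurable
    (by
      refine (ae_restrict_iff' measurableSet_Ioc).2 (Eventually.of_forall fun x hx y hy => ?_)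
      have e0 := he.1
      have hy0 : 0 < y := by linarith [hy.1]
      obtain ⟨b0, b1⟩ := regularKernelDeriv_bounds ⟨hy0, hy.2⟩ hx
      have hw := endpointWeight_nonneg σ x
      rw [Real.norm_of_nonneg (mul_nonneg b0 hw), ← mul_assoc]
      refine mul_le_mul_of_nonneg_right (b1.trans ?_) hw
      have hk : 0 ≤ regularKernel y x := by unfold regularKernel; positivity
      refine mul_le_mul ?_ (regularKernel_mono hy0.le hy.2.le hx) hk (by positivity)
      rw [div_le_div_iff₀ (by positivity) e0]
      linarith [hy.1])
    (hI.const_mul _)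
    (by
      refine (ae_restrict_iff' measurableSet_Ioc).2 (Eventually.of_forall fun x hx y hy => ?_)
      exact (hasDerivAt_regularKernel ⟨by linarith [hy.1, he.1], hy.2⟩ hx).mul_const _)
  refine ⟨_, hd, setIntegral_nonneg measurableSet_Ioc fun x hx =>
    mul_nonneg (regularKernelDeriv_bounds he hx).1 (endpointWeight_nonneg σ x), ?_⟩
  rw [regularFactor, ← integral_const_mul]
  refine setIntegral_mono_on hi ((integrableOn_regularKernel_mul hσ e).const_mul _)
    measurableSet_Ioc fun x hx => ?_
  rw [← mul_assoc]
  exact mul_le_mul_of_nonneg_right (regularKernelDeriv_bounds he hx).2 (endpointWeight_nonneg σ x)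

lemma descentRate_pos {σ e : ℝ} (hσ : 0 < σ) (he : e ∈ Ioo (0:ℝ) 1) : 0 < descentRate σ e := by
  have h1 := regularFactor_pos hσ he.1.le
  have h2 : 0 < 1 - e := sub_pos.2 he.2
  have h3 := he.1
  unfold descentRate
  positivity

lemma exists_hasDerivAt_descentRate {σ e : ℝ} (hσ : 0 < σ) (he : e ∈ Ioo (0:ℝ) 1) :
    ∃ d, HasDerivAt (descentRate σ) (-d) e ∧ (σ + 3 / 2) / (1 - e) * descentRate σ e ≤ d ∧
      d ≤ (4 / e + (σ + 3 / 2) / (1 - e)) * descentRate σ e := by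
  obtain ⟨m, hm, m0, m1⟩ := exists_hasDerivAt_regularFactor hσ he
  have e0 := he.1
  have e1 : 0 < 1 - e := sub_pos.2 he.2
  have hM := regularFactor_pos hσ e0.le
  have d1 : HasDerivAt (fun y : ℝ => (y ^ 4)⁻¹) (-(4 / e * (e ^ 4)⁻¹)) e := by
    exact (((hasDerivAt_id e).pow 4).inv (pow_ne_zero 4 e0.ne')).congr_deriv
      (by simp; field_simp)
  have d2 : HasDerivAt (fun y : ℝ => (1 - y) ^ (σ + 3 / 2))
      (-((σ + 3 / 2) / (1 - e) * (1 - e) ^ (σ + 3 / 2))) e := by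
    refine (((hasDerivAt_id e).const_sub 1).rpow_const (p := σ + 3 / 2)
      (Or.inl e1.ne')).congr_deriv ?_
    simp only [id]
    rw [Real.rpow_sub_one e1.ne']; field_simp
  have d3 := ((d1.mul d2).mul hm).const_mul (σ + 1)
  set P := (1 - e) ^ (σ + 3 / 2) with hP
  have hP0 : 0 < P := by positivity
  have hc : 0 < (σ + 1) * ((e ^ 4)⁻¹ * P) := by positivity
  refine ⟨(4 / e + (σ + 3 / 2) / (1 - e)) * descentRate σ e -
    (σ + 1) * ((e ^ 4)⁻¹ * P) * m, ?_, ?_, ?_⟩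
  · refine d3.congr_deriv ?_
    simp only [descentRate, ← hP, Pi.mul_apply]
    ring
  · have : (σ + 1) * ((e ^ 4)⁻¹ * P) * m ≤ 4 / e * descentRate σ e := by
      calc _ ≤ (σ + 1) * ((e ^ 4)⁻¹ * P) * (5 / (2 * e) * regularFactor σ e) := by gcongr
        _ ≤ (σ + 1) * ((e ^ 4)⁻¹ * P) * (4 / e * regularFactor σ e) := by
          have : 5 / (2 * e) ≤ 4 / e := by
            rw [div_le_div_iff₀ (by positivity) e0]; linarith
          gcongr
        _ = _ := by simp only [descentRate, ← hP]; ring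
    linarith
  · have := mul_nonneg hc.le m0
    linarith

lemma continuousOn_descentRate {σ : ℝ} (hσ : 0 < σ) :
    ContinuousOn (descentRate σ) (Ioo 0 1) := fun _ he =>
  let ⟨_, hd, _⟩ := exists_hasDerivAt_descentRate hσ he
  hd.continuousAt.continuousWithinAt

lemma strictAntiOn_descentRate {σ : ℝ} (hσ : 0 < σ) : StrictAntiOn (descentRate σ) (Ioo 0 1) := by
  refine strictAntiOn_of_deriv_neg (convex_Ioo 0 1) (continuousOn_descentRate hσ) fun e he => ?_
  rw [interior_Ioo] at he
  obtain ⟨d, hd, h1, -⟩ := exists_hasDerivAt_descentRate hσ he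
  have := descentRate_pos hσ he
  have e1 : 0 < 1 - e := sub_pos.2 he.2
  have : 0 < (σ + 3 / 2) / (1 - e) * descentRate σ e := by positivity
  rw [hd.deriv]
  linarith

/-- Constant in the lower bound of `-G'` near `0`. -/
noncomputable def rateConst (σ : ℝ) : ℝ :=
  (σ + 1) * ((1 / 4) ^ (σ + 3 / 2) * regularFactor σ 0)

lemma rateConst_pos {σ : ℝ} (hσ : 0 < σ) : 0 < rateConst σ := by
  have := regularFactor_zero_pos hσ
  unfold rateConst; positivity

lemma rateConst_le_descentRate {σ e : ℝ} (hσ : 0 < σ) (he : e ∈ Ioc (0:ℝ) (3 / 4)) :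
    rateConst σ * (e ^ 4)⁻¹ ≤ descentRate σ e := by
  have e0 := he.1
  have e1 : 1 / 4 ≤ 1 - e := by linarith [he.2]
  have h0 := regularFactor_zero_pos hσ
  calc _ = (σ + 1) * ((e ^ 4)⁻¹ * (1 / 4) ^ (σ + 3 / 2) * regularFactor σ 0) := by
        unfold rateConst; ring
    _ ≤ _ := by
      unfold descentRate
      have := regularFactor_mono hσ le_rfl e0.le
      gcongr

lemma descentRate_le_near_one {σ e : ℝ} (hσ : 0 < σ) (he : e ∈ Ico (1 / 2 : ℝ) 1) :
    descentRate σ e ≤ 16 * (σ + 1) * regularFactor σ 1 * (1 - e) ^ (σ + 3 / 2) := by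
  have e0 : 0 < e := by linarith [he.1]
  have e1 : 0 < 1 - e := sub_pos.2 he.2
  have h1 := regularFactor_pos hσ e0.le
  have hinv : (e ^ 4)⁻¹ ≤ 16 := by
    rw [inv_le_comm₀ (by positivity) (by norm_num)]
    calc (16:ℝ)⁻¹ = (1 / 2) ^ 4 := by norm_num
      _ ≤ e ^ 4 := by gcongr; exact he.1
  calc descentRate σ e ≤ (σ + 1) * (16 * (1 - e) ^ (σ + 3 / 2) * regularFactor σ 1) := by
        unfold descentRate
        have := regularFactor_mono hσ e0.le he.2.le
        gcongr
    _ = _ := by ring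

lemma le_descentRate_near_one {σ e : ℝ} (hσ : 0 < σ) (he : e ∈ Ioo (0:ℝ) 1) :
    (σ + 1) * regularFactor σ 0 * (1 - e) ^ (σ + 3 / 2) ≤ descentRate σ e := by
  have e0 := he.1
  have e1 : 0 < 1 - e := sub_pos.2 he.2
  have h0 := regularFactor_zero_pos hσ
  have hinv : 1 ≤ (e ^ 4)⁻¹ := by
    rw [one_le_inv₀ (by positivity)]
    exact pow_le_one₀ e0.le he.2.le
  calc _ = (σ + 1) * (1 * (1 - e) ^ (σ + 3 / 2) * regularFactor σ 0) := by ring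
    _ ≤ _ := by
      unfold descentRate
      have := regularFactor_mono hσ le_rfl e0.le
      gcongr

lemma exists_descentRate_eq {σ t : ℝ} (hσ : 0 < σ) (ht : 0 < t) :
    ∃ e ∈ Ioo (0:ℝ) 1, descentRate σ e = t := by
  have hc := rateConst_pos hσ
  have hB : 0 < 16 * (σ + 1) * regularFactor σ 1 := by
    have := regularFactor_pos hσ zero_le_one
    positivity
  set B := 16 * (σ + 1) * regularFactor σ 1
  set a := min (1 / 2) (rateConst σ / t) with ha
  set δ := min (1 / 4) ((t / B) ^ (σ + 3 / 2)⁻¹) with hδ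
  have a0 : 0 < a := lt_min (by norm_num) (by positivity)
  have a1 : a ≤ 1 / 2 := min_le_left _ _
  have δ0 : 0 < δ := lt_min (by norm_num) (by positivity)
  have δ1 : δ ≤ 1 / 4 := min_le_left _ _
  have ha' : t ≤ descentRate σ a := by
    refine le_trans ?_ (rateConst_le_descentRate hσ ⟨a0, by linarith⟩)
    have h1 : a * t ≤ rateConst σ := (le_div_iff₀ ht).1 (min_le_right _ _)
    rw [← div_eq_mul_inv, le_div_iff₀ (by positivity)]
    have h2 : a ^ 4 ≤ a := by
      simpa using pow_le_pow_of_le_one a0.le (by linarith) (show 1 ≤ 4 by norm_num)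
    nlinarith
  have hb' : descentRate σ (1 - δ) ≤ t := by
    refine (descentRate_le_near_one hσ ⟨by linarith, by linarith⟩).trans ?_
    rw [sub_sub_cancel]
    have h1 : δ ^ (σ + 3 / 2) ≤ t / B := by
      calc δ ^ (σ + 3 / 2) ≤ ((t / B) ^ (σ + 3 / 2)⁻¹) ^ (σ + 3 / 2) := by
            gcongr; exact min_le_right _ _
        _ = t / B := Real.rpow_inv_rpow (by positivity) (by positivity)
    calc _ ≤ B * (t / B) := by gcongr
      _ = t := by field_simp
  have hsub : Icc a (1 - δ) ⊆ Ioo 0 1 := fun x hx => ⟨a0.trans_le hx.1, by linarith [hx.2]⟩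
  obtain ⟨e, he, het⟩ := intermediate_value_Icc' (by linarith)
    ((continuousOn_descentRate hσ).mono hsub) ⟨hb', ha'⟩
  exact ⟨e, hsub he, het⟩

lemma GderivFun_eq_neg_descentRate {σ e : ℝ} (hσ : 0 < σ) (he : e ∈ Ioo (0:ℝ) 1) :
    GderivFun σ 1 e = -descentRate σ e := by
  obtain ⟨e0, e1'⟩ := he
  have e1 : 0 < 1 - e := sub_pos.2 e1'
  have hw1 : ∀ ξ : ℝ, 0 < ξ → 1 < √(1 + ξ ^ 2) := fun ξ hξ => by
    rw [Real.lt_sqrt zero_le_one]; nlinarith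
  have hd : ∀ ξ ∈ Ioi (0:ℝ), HasDerivWithinAt (fun ξ : ℝ => e * (√(1 + ξ ^ 2) - 1) / (1 - e))
      (e * (ξ / √(1 + ξ ^ 2)) / (1 - e)) (Ioi 0) ξ := fun ξ _ => by
    have h1 : HasDerivAt (fun ξ : ℝ => 1 + ξ ^ 2) (2 * ξ) ξ := by
      simpa using ((hasDerivAt_id ξ).pow 2).const_add 1
    refine ((((h1.sqrt (by positivity)).sub_const 1).const_mul e).div_const
      (1 - e)).congr_deriv ?_ |>.hasDerivWithinAt
    field_simp
  have hinj : InjOn (fun ξ : ℝ => e * (√(1 + ξ ^ 2) - 1) / (1 - e)) (Ioi 0) := by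
    intro a ha b hb hab
    have h1 : e * (√(1 + a ^ 2) - 1) = e * (√(1 + b ^ 2) - 1) := by
      simpa [div_left_inj' e1.ne'] using hab
    have h2 : √(1 + a ^ 2) = √(1 + b ^ 2) := by
      have := mul_left_cancel₀ e0.ne' h1
      linarith
    rw [Real.sqrt_inj (by positivity) (by positivity), add_right_inj] at h2
    exact (pow_left_inj₀ (le_of_lt ha) (le_of_lt hb) two_ne_zero).1 h2
  have himg : (fun ξ : ℝ => e * (√(1 + ξ ^ 2) - 1) / (1 - e)) '' Ioi 0 = Ioi 0 := by
    ext x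
    constructor
    · rintro ⟨ξ, hξ, rfl⟩
      have := sub_pos.2 (hw1 ξ hξ)
      exact div_pos (mul_pos e0 this) e1
    · intro hx
      have hx' : 0 < (1 - e) * x / e := div_pos (mul_pos e1 hx) e0
      refine ⟨√((1 + (1 - e) * x / e) ^ 2 - 1), Real.sqrt_pos.2 (by nlinarith), ?_⟩
      dsimp only
      rw [Real.sq_sqrt (by nlinarith), add_sub_cancel, Real.sqrt_sq (by positivity)]
      field_simp
      ring
  have key := integral_image_eq_integral_abs_deriv_smul measurableSet_Ioi hd hinj
    (fun x => regularKernel e x * endpointWeight σ x)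
  rw [himg] at key
  have hM : regularFactor σ e = ∫ x in Ioi (0:ℝ), regularKernel e x * endpointWeight σ x := by
    refine (setIntegral_eq_of_subset_of_forall_sdiff_eq_zero measurableSet_Ioi
      Ioc_subset_Ioi_self fun x hx => ?_).symm
    have : 1 < x := by
      by_contra! h
      exact hx.2 ⟨hx.1, h⟩
    simp [endpointWeight, max_eq_right (sub_nonpos.2 this.le), Real.zero_rpow hσ.ne']
  have hpoint : ∀ ξ ∈ Ioi (0:ℝ), |e * (ξ / √(1 + ξ ^ 2)) / (1 - e)| •
      (regularKernel e (e * (√(1 + ξ ^ 2) - 1) / (1 - e)) *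
        endpointWeight σ (e * (√(1 + ξ ^ 2) - 1) / (1 - e))) =
      e ^ 4 * ((1 - e) ^ (σ + 3 / 2))⁻¹ *
        (ξ ^ 2 * √(1 + ξ ^ 2) * (max (1 - e * √(1 + ξ ^ 2)) 0) ^ σ) := by
    intro ξ hξ
    have hξ0 : 0 < ξ := hξ
    have hw := hw1 ξ hξ
    have hw2 : √(1 + ξ ^ 2) ^ 2 = 1 + ξ ^ 2 := Real.sq_sqrt (by positivity)
    set w := √(1 + ξ ^ 2)
    have hw0 : 0 < w := by linarith
    have hx0 : 0 ≤ e * (w - 1) / (1 - e) := div_nonneg (mul_nonneg e0.le (by linarith)) e1.le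
    have a1 : e + (1 - e) * (e * (w - 1) / (1 - e)) = e * w := by field_simp; ring
    have a2 : 2 * e + (1 - e) * (e * (w - 1) / (1 - e)) = e * (w + 1) := by field_simp; ring
    have a3 : √(e * (w + 1)) * √(e * (w - 1) / (1 - e)) = e * ξ / √(1 - e) := by
      rw [← Real.sqrt_mul (by positivity)]
      have : e * (w + 1) * (e * (w - 1) / (1 - e)) = (e * ξ) ^ 2 / (1 - e) := by
        rw [mul_div_assoc']; congr 1; linear_combination e ^ 2 * hw2
      rw [this, Real.sqrt_div (by positivity), Real.sqrt_sq (by positivity)]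
    have a4 : max (1 - e * (w - 1) / (1 - e)) 0 = max (1 - e * w) 0 / (1 - e) := by
      have : 1 - e * (w - 1) / (1 - e) = (1 - e * w) / (1 - e) := by field_simp; ring
      rw [this, ← max_div_div_right e1.le, zero_div]
    have a5 : (1 - e) ^ (σ + 3 / 2) = (1 - e) ^ σ * ((1 - e) * √(1 - e)) := by
      rw [Real.sqrt_eq_rpow, ← Real.rpow_one_add' e1.le (by norm_num), ← Real.rpow_add e1]
      norm_num
    rw [abs_of_pos (by positivity), smul_eq_mul]
    unfold regularKernel endpointWeight
    rw [a1, a2, a4, Real.div_rpow (le_max_right _ _) e1.le, a5]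
    have hs : 0 < √(1 - e) := Real.sqrt_pos.2 e1
    calc _ = e * (ξ / w) / (1 - e) * ((e * w) ^ 2 *
          (√(e * (w + 1)) * √(e * (w - 1) / (1 - e))) *
          ((max (1 - e * w) 0) ^ σ / (1 - e) ^ σ)) := by ring
      _ = _ := by
        rw [a3]
        have : 0 < (1 - e) ^ σ := by positivity
        field_simp
  rw [setIntegral_congr_fun measurableSet_Ioi hpoint, integral_const_mul, ← hM] at key
  unfold GderivFun descentRate
  rw [key]
  have : 0 < (1 - e) ^ (σ + 3 / 2) := by positivity
  generalize (∫ ξ in Ioi (0:ℝ), ξ ^ 2 * √(1 + ξ ^ 2) * (max (1 - e * √(1 + ξ ^ 2)) 0) ^ σ) = J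
  field_simp

lemma GderivFun_eq_zero {σ e : ℝ} (hσ : 0 < σ) (he : 1 ≤ e) : GderivFun σ 1 e = 0 := by
  unfold GderivFun
  rw [setIntegral_eq_zero_of_forall_eq_zero, mul_zero]
  intro ξ _
  have h1 : 1 ≤ √(1 + ξ ^ 2) := Real.one_le_sqrt.2 (by nlinarith [sq_nonneg ξ])
  rw [max_eq_right (by nlinarith), Real.zero_rpow hσ.ne', mul_zero]

lemma hasDerivAt_max_zero_rpow {σ : ℝ} (hσ : 0 < σ) (x : ℝ) :
    HasDerivAt (fun y : ℝ => (max y 0) ^ (σ + 1)) ((σ + 1) * (max x 0) ^ σ) x := by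
  have hp : ∀ y : ℝ, HasDerivAt (fun y : ℝ => y ^ (σ + 1)) ((σ + 1) * y ^ σ) y := fun y => by
    simpa using Real.hasDerivAt_rpow_const (x := y) (p := σ + 1) (Or.inr (by linarith))
  rcases lt_trichotomy x 0 with hx | rfl | hx
  · rw [max_eq_right hx.le, Real.zero_rpow hσ.ne', mul_zero]
    refine (hasDerivAt_const x (0:ℝ)).congr_of_eventuallyEq ?_
    filter_upwards [Iio_mem_nhds hx] with y hy
    rw [max_eq_right (le_of_lt hy), Real.zero_rpow (by positivity)]
  · rw [max_self, ← hasDerivWithinAt_univ, ← Iic_union_Ici (a := (0:ℝ))]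
    refine HasDerivWithinAt.union ?_ ?_
    · rw [Real.zero_rpow hσ.ne', mul_zero]
      refine (hasDerivWithinAt_const (0:ℝ) _ (0:ℝ)).congr (fun y hy => ?_) ?_
      · rw [max_eq_right hy, Real.zero_rpow (by positivity)]
      · rw [max_self, Real.zero_rpow (by positivity)]
    · refine (hp 0).hasDerivWithinAt.congr (fun y hy => ?_) ?_
      · rw [max_eq_left hy]
      · rw [max_self]
  · rw [max_eq_left hx.le]
    refine (hp x).congr_of_eventuallyEq ?_
    filter_upwards [Ioi_mem_nhds hx] with y hy
    rw [max_eq_left (le_of_lt hy)]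

lemma integrableOn_mul_max_rpow {f : ℝ → ℝ} (hf : Continuous f) {p e : ℝ} (hp : 0 < p)
    (he : 0 < e) :
    IntegrableOn (fun ξ => f ξ * (max (1 - e * √(1 + ξ ^ 2)) 0) ^ p) (Ioi 0) := by
  have hc : Continuous fun ξ => f ξ * (max (1 - e * √(1 + ξ ^ 2)) 0) ^ p :=
    hf.mul ((by fun_prop : Continuous fun ξ : ℝ => max (1 - e * √(1 + ξ ^ 2)) 0).rpow_const
      fun _ => Or.inr hp.le)
  refine (hc.integrableOn_Icc (a := 0) (b := 1 / e)).of_forall_sdiff_eq_zero measurableSet_Ioi ?_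
  intro ξ hξ
  have h0 : 0 < ξ := hξ.1
  have h1 : 1 / e < ξ := by
    by_contra! h
    exact hξ.2 ⟨h0.le, h⟩
  have h2 : ξ ≤ √(1 + ξ ^ 2) := Real.le_sqrt_of_sq_le (by linarith)
  rw [div_lt_iff₀ he] at h1
  rw [max_eq_right (by nlinarith), Real.zero_rpow hp.ne', mul_zero]

lemma hasDerivAt_Gfun {σ e : ℝ} (hσ : 0 < σ) (he : 0 < e) :
    HasDerivAt (Gfun σ 1) (GderivFun σ 1 e) e := by
  have hi := fun {y : ℝ} (hy : 0 < y) => (integrableOn_mul_max_rpow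
    (f := fun ξ => ξ ^ 2 * √(1 + ξ ^ 2)) (by fun_prop) hσ hy).const_mul (-(σ + 1))
  have hI : ∀ {y : ℝ}, 0 < y → IntegrableOn
      (fun ξ => ξ ^ 2 * (max (1 - y * √(1 + ξ ^ 2)) 0) ^ (σ + 1)) (Ioi 0) := fun {y} hy =>
    integrableOn_mul_max_rpow (f := fun ξ => ξ ^ 2) (by fun_prop) (by positivity) hy
  have he2 : 0 < e / 2 := by positivity
  obtain ⟨-, hd⟩ := hasDerivAt_integral_of_dominated_loc_of_deriv_le
    (μ := volume.restrict (Ioi (0:ℝ)))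
    (F := fun y ξ => ξ ^ 2 * (max (1 - y * √(1 + ξ ^ 2)) 0) ^ (σ + 1))
    (F' := fun y ξ => -(σ + 1) * (ξ ^ 2 * √(1 + ξ ^ 2) * (max (1 - y * √(1 + ξ ^ 2)) 0) ^ σ))
    (bound := fun ξ => ‖-(σ + 1) * (ξ ^ 2 * √(1 + ξ ^ 2) *
      (max (1 - e / 2 * √(1 + ξ ^ 2)) 0) ^ σ)‖)
    (Ioi_mem_nhds (show e / 2 < e by linarith))
    (by
      filter_upwards [Ioi_mem_nhds he] with y hy
      exact (hI hy).aestronglyMeasurable)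
    (hI he) (hi he).aestronglyMeasurable
    (by
      refine Eventually.of_forall fun ξ y hy => ?_
      have hy' : e / 2 ≤ y := le_of_lt hy
      rw [norm_mul, norm_mul (-(σ + 1))]
      refine mul_le_mul_of_nonneg_left ?_ (norm_nonneg _)
      rw [Real.norm_of_nonneg (by positivity), Real.norm_of_nonneg (by positivity)]
      gcongr)
    (hi he2).norm
    (by
      refine Eventually.of_forall fun ξ y _ => ?_
      have h1 : HasDerivAt (fun y : ℝ => 1 - y * √(1 + ξ ^ 2)) (-√(1 + ξ ^ 2)) y := by
        simpa using ((hasDerivAt_id y).mul_const √(1 + ξ ^ 2)).const_sub 1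
      refine (((hasDerivAt_max_zero_rpow hσ _).comp y h1).const_mul (ξ ^ 2)).congr_deriv ?_
      ring)
  rw [integral_const_mul] at hd
  exact hd

/-- The point of `(0, 1)` where `-G'` takes the value `t`, for `α = 1`. -/
noncomputable def maximizer (σ t : ℝ) : ℝ :=
  Function.invFunOn (descentRate σ) (Ioo 0 1) t

lemma maximizer_mem {σ t : ℝ} (hσ : 0 < σ) (ht : 0 < t) : maximizer σ t ∈ Ioo (0:ℝ) 1 :=
  Function.invFunOn_mem (exists_descentRate_eq hσ ht)

lemma descentRate_maximizer {σ t : ℝ} (hσ : 0 < σ) (ht : 0 < t) :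
    descentRate σ (maximizer σ t) = t :=
  Function.invFunOn_eq (exists_descentRate_eq hσ ht)

lemma continuousAt_maximizer {σ t : ℝ} (hσ : 0 < σ) (ht : 0 < t) :
    ContinuousAt (maximizer σ) t := by
  have hmono : MonotoneOn (fun t => -maximizer σ t) (Ioi 0) := by
    intro a ha b hb hab
    have h := (strictAntiOn_descentRate hσ).le_iff_ge (maximizer_mem hσ ha) (maximizer_mem hσ hb)
    rw [descentRate_maximizer hσ ha, descentRate_maximizer hσ hb] at h
    exact neg_le_neg (h.1 hab)
  have himg : (fun t => -maximizer σ t) '' Ioi 0 ∈ 𝓝 (-maximizer σ t) := by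
    have hm := maximizer_mem hσ ht
    refine mem_of_superset (Ioo_mem_nhds (neg_lt_neg hm.2) (neg_lt_neg hm.1)) fun y hy => ?_
    have hy' : -y ∈ Ioo (0:ℝ) 1 := ⟨by linarith [hy.2], by linarith [hy.1]⟩
    have hp := descentRate_pos hσ hy'
    refine ⟨descentRate σ (-y), hp, ?_⟩
    have := (strictAntiOn_descentRate hσ).injOn (maximizer_mem hσ hp) hy'
      (descentRate_maximizer hσ hp)
    simp [this]
  simpa only [neg_neg] using
    (continuousAt_of_monotoneOn_of_image_mem_nhds hmono (Ioi_mem_nhds ht) himg).fun_neg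

lemma calG_one_eq {σ t : ℝ} (hσ : 0 < σ) (ht : 0 < t) :
    calG σ 1 t = -(t * maximizer σ t) - Gfun σ 1 (maximizer σ t) := by
  have hm := maximizer_mem hσ ht
  have hs := descentRate_maximizer hσ ht
  set e := maximizer σ t
  have hd : ∀ y : ℝ, 0 < y → HasDerivAt (fun y => -(t * y) - Gfun σ 1 y)
      (-t - GderivFun σ 1 y) y := fun y hy => by
    exact (((hasDerivAt_id y).const_mul t).neg.sub (hasDerivAt_Gfun hσ hy)).congr_deriv (by simp)
  refine IsGreatest.csSup_eq ⟨⟨e, hm.1, by ring⟩, ?_⟩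
  rintro _ ⟨y, hy, rfl⟩
  rw [mul_neg, mul_comm y]
  rcases le_total y e with h | h
  · have hpos : ∀ z ∈ Icc y e, 0 < z := fun z hz => hy.trans_le hz.1
    refine monotoneOn_of_deriv_nonneg (convex_Icc y e)
      (fun z hz => (hd z (hpos z hz)).continuousAt.continuousWithinAt)
      (fun z hz => (hd z (hpos z (interior_subset hz))).differentiableAt.differentiableWithinAt)
      (fun z hz => ?_) (left_mem_Icc.2 h) (right_mem_Icc.2 h) h
    have hz' := interior_subset hz
    have hz1 : z ∈ Ioo (0:ℝ) 1 := ⟨hpos z hz', hz'.2.trans_lt hm.2⟩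
    rw [(hd z hz1.1).deriv, GderivFun_eq_neg_descentRate hσ hz1]
    have := (strictAntiOn_descentRate hσ).antitoneOn hz1 hm hz'.2
    linarith
  · have hpos : ∀ z ∈ Icc e y, 0 < z := fun z hz => hm.1.trans_le hz.1
    refine antitoneOn_of_deriv_nonpos (convex_Icc e y)
      (fun z hz => (hd z (hpos z hz)).continuousAt.continuousWithinAt)
      (fun z hz => (hd z (hpos z (interior_subset hz))).differentiableAt.differentiableWithinAt)
      (fun z hz => ?_) (left_mem_Icc.2 h) (right_mem_Icc.2 h) h
    have hz' := interior_subset hz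
    rw [(hd z (hpos z hz')).deriv]
    rcases lt_or_ge z 1 with hz1 | hz1
    · rw [GderivFun_eq_neg_descentRate hσ ⟨hpos z hz', hz1⟩]
      have := (strictAntiOn_descentRate hσ).antitoneOn hm ⟨hpos z hz', hz1⟩ hz'.1
      linarith
    · rw [GderivFun_eq_zero hσ hz1]
      linarith

lemma exists_deriv_deriv_calG_one {σ t : ℝ} (hσ : 0 < σ) (ht : 0 < t) :
    ∃ d, 0 < d ∧ deriv (deriv (calG σ 1)) t = d⁻¹ ∧
      (σ + 3 / 2) / (1 - maximizer σ t) * t ≤ d ∧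
      d ≤ (4 / maximizer σ t + (σ + 3 / 2) / (1 - maximizer σ t)) * t := by
  have hinv : ∀ s : ℝ, 0 < s → ∃ d, 0 < d ∧ HasDerivAt (maximizer σ) (-d)⁻¹ s ∧
      (σ + 3 / 2) / (1 - maximizer σ s) * s ≤ d ∧
      d ≤ (4 / maximizer σ s + (σ + 3 / 2) / (1 - maximizer σ s)) * s := by
    intro s hs
    have hm := maximizer_mem hσ hs
    obtain ⟨d, hd, h1, h2⟩ := exists_hasDerivAt_descentRate hσ hm
    rw [descentRate_maximizer hσ hs] at h1 h2
    have h3 : 0 < 1 - maximizer σ s := sub_pos.2 hm.2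
    have h4 : 0 < (σ + 3 / 2) / (1 - maximizer σ s) * s := by positivity
    have h5 : 0 < d := h4.trans_le h1
    refine ⟨d, h5, HasDerivAt.of_local_left_inverse (continuousAt_maximizer hσ hs) hd
      (neg_ne_zero.2 h5.ne') ?_, h1, h2⟩
    filter_upwards [Ioi_mem_nhds hs] with y hy using descentRate_maximizer hσ hy
  have hfirst : ∀ s : ℝ, 0 < s → deriv (calG σ 1) s = -maximizer σ s := by
    intro s hs
    obtain ⟨d, -, hd, -⟩ := hinv s hs
    have hm := maximizer_mem hσ hs
    have hG := (hasDerivAt_Gfun hσ hm.1).comp s hd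
    rw [GderivFun_eq_neg_descentRate hσ hm, descentRate_maximizer hσ hs] at hG
    have h : HasDerivAt (calG σ 1) (-maximizer σ s) s := by
      refine HasDerivAt.congr_of_eventuallyEq
        ((((hasDerivAt_id s).mul hd).neg.sub hG).congr_deriv (by simp)) ?_
      filter_upwards [Ioi_mem_nhds hs] with y hy
      simpa using calG_one_eq hσ hy
    exact h.deriv
  obtain ⟨d, h0, hd, h1, h2⟩ := hinv t ht
  refine ⟨d, h0, ?_, h1, h2⟩
  have : deriv (calG σ 1) =ᶠ[𝓝 t] fun s => -maximizer σ s := by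
    filter_upwards [Ioi_mem_nhds ht] with s hs using hfirst s hs
  rw [this.deriv_eq, hd.fun_neg.deriv]
  simp [inv_neg]

lemma max_sub_rpow_scaling {α : ℝ} (hα : 0 < α) (ε w p : ℝ) :
    (max (α - ε * w) 0) ^ p = α ^ p * (max (1 - ε / α * w) 0) ^ p := by
  rw [← Real.mul_rpow hα.le (le_max_right _ _), mul_max_of_nonneg _ _ hα.le, mul_zero]
  congr 2
  field_simp

lemma Gfun_scaling {σ α : ℝ} (hα : 0 < α) (ε : ℝ) :
    Gfun σ α ε = α ^ (σ + 1) * Gfun σ 1 (ε / α) := by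
  unfold Gfun
  rw [← integral_const_mul]
  congr 1 with ξ
  rw [max_sub_rpow_scaling hα]
  ring

lemma GderivFun_scaling {σ α : ℝ} (hα : 0 < α) (ε : ℝ) :
    GderivFun σ α ε = α ^ σ * GderivFun σ 1 (ε / α) := by
  unfold GderivFun
  rw [mul_left_comm, ← integral_const_mul (α ^ σ)]
  congr 2 with ξ
  rw [max_sub_rpow_scaling hα]
  ring

lemma calG_scaling {σ α : ℝ} (hα : 0 < α) (s : ℝ) :
    calG σ α s = α ^ (σ + 1) * calG σ 1 (α ^ (-σ) * s) := by
  have hpow : α ^ (σ + 1) * α ^ (-σ) = α := by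
    rw [← Real.rpow_add hα]; simp
  unfold calG GhatFun
  rw [← smul_eq_mul (α ^ (σ + 1)), ← Real.sSup_smul_of_nonneg (by positivity)]
  congr 1
  ext y
  simp only [mem_smul_set, mem_ofPred_eq, smul_eq_mul]
  constructor
  · rintro ⟨ε, hε, rfl⟩
    refine ⟨_, ⟨ε / α, by positivity, rfl⟩, ?_⟩
    rw [Gfun_scaling hα, mul_sub]
    congr 1
    calc _ = -(ε / α * (α ^ (σ + 1) * α ^ (-σ)) * s) := by ring
      _ = _ := by rw [hpow]; field_simp
  · rintro ⟨_, ⟨ε, hε, rfl⟩, rfl⟩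
    refine ⟨α * ε, by positivity, ?_⟩
    rw [Gfun_scaling hα, mul_div_cancel_left₀ _ hα.ne', mul_sub]
    congr 1
    calc _ = -(ε * (α ^ (σ + 1) * α ^ (-σ)) * s) := by ring
      _ = _ := by rw [hpow]; ring

lemma deriv_deriv_calG_scaling {σ α : ℝ} (hα : 0 < α) (s : ℝ) :
    deriv (deriv (calG σ α)) s = α ^ (1 - σ) * deriv (deriv (calG σ 1)) (α ^ (-σ) * s) := by
  have h0 : calG σ α = fun s => α ^ (σ + 1) * calG σ 1 (α ^ (-σ) * s) :=
    funext (calG_scaling hα)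
  have h1 : deriv (calG σ α) = fun s =>
      α ^ (σ + 1) * α ^ (-σ) * deriv (calG σ 1) (α ^ (-σ) * s) := by
    funext s
    rw [h0, deriv_const_mul_field, deriv_comp_mul_left, smul_eq_mul, mul_assoc]
  rw [h1, deriv_const_mul_field, deriv_comp_mul_left, smul_eq_mul, ← mul_assoc,
    ← Real.rpow_add hα, ← Real.rpow_add hα]
  ring_nf

lemma deriv_deriv_calG_one_bounds {σ t : ℝ} (hσ : 0 < σ) (ht : t ∈ Ioc 0 (2 * rateConst σ)) :
    (16 * (σ + 1) * regularFactor σ 1) ^ (-(σ + 3 / 2)⁻¹) / (σ + 19 / 2) *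
        t ^ (-((1 + 2 * σ) / (3 + 2 * σ))) ≤ deriv (deriv (calG σ 1)) t ∧
      deriv (deriv (calG σ 1)) t ≤ ((σ + 1) * regularFactor σ 0) ^ (-(σ + 3 / 2)⁻¹) /
        (σ + 3 / 2) * t ^ (-((1 + 2 * σ) / (3 + 2 * σ))) := by
  obtain ⟨t0, ht⟩ := ht
  obtain ⟨d, d0, hd, h1, h2⟩ := exists_deriv_deriv_calG_one hσ t0
  have hm := maximizer_mem hσ t0
  have hs := descentRate_maximizer hσ t0
  have hA := le_descentRate_near_one hσ hm
  have hhalf : 1 / 2 ≤ maximizer σ t := by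
    by_contra! h
    have h3 := rateConst_le_descentRate hσ ⟨hm.1, by linarith⟩
    have hc := rateConst_pos hσ
    have h4 : 16 ≤ (maximizer σ t ^ 4)⁻¹ := by
      have hm0 := hm.1
      rw [le_inv_comm₀ (by norm_num) (by positivity)]
      calc maximizer σ t ^ 4 ≤ (1 / 2) ^ 4 := by gcongr
        _ = 16⁻¹ := by norm_num
    nlinarith
  have hB := descentRate_le_near_one hσ ⟨hhalf, hm.2⟩
  rw [hs] at hA hB
  have hA0 : 0 < (σ + 1) * regularFactor σ 0 := by
    have := regularFactor_zero_pos hσ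
    positivity
  have hB0 : 0 < 16 * (σ + 1) * regularFactor σ 1 := by
    have := regularFactor_pos hσ zero_le_one
    positivity
  set A := (σ + 1) * regularFactor σ 0
  set B := 16 * (σ + 1) * regularFactor σ 1
  have hδ : 0 < 1 - maximizer σ t := sub_pos.2 hm.2
  have hp : 0 < σ + 3 / 2 := by positivity
  have hδA : 1 - maximizer σ t ≤ A ^ (-(σ + 3 / 2)⁻¹) * t ^ (σ + 3 / 2)⁻¹ := by
    rw [Real.rpow_neg hA0.le, ← Real.inv_rpow hA0.le, ← Real.mul_rpow (by positivity) t0.le,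
      Real.le_rpow_inv_iff_of_pos hδ.le (by positivity) hp, inv_mul_eq_div, le_div_iff₀ hA0]
    linarith
  have hδB : B ^ (-(σ + 3 / 2)⁻¹) * t ^ (σ + 3 / 2)⁻¹ ≤ 1 - maximizer σ t := by
    rw [Real.rpow_neg hB0.le, ← Real.inv_rpow hB0.le, ← Real.mul_rpow (by positivity) t0.le,
      Real.rpow_inv_le_iff_of_pos (by positivity) hδ.le hp, inv_mul_eq_div, div_le_iff₀ hB0]
    linarith
  have hq : t ^ (-((1 + 2 * σ) / (3 + 2 * σ))) = t ^ (σ + 3 / 2)⁻¹ / t := by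
    rw [← Real.rpow_sub_one t0.ne']
    congr 1
    have : 3 + 2 * σ ≠ 0 := by positivity
    have : σ + 3 / 2 ≠ 0 := hp.ne'
    field_simp
    ring
  have hd2 : d ≤ (σ + 19 / 2) / (1 - maximizer σ t) * t := by
    refine h2.trans (mul_le_mul_of_nonneg_right ?_ t0.le)
    have h3 : 4 / maximizer σ t ≤ 8 / (1 - maximizer σ t) := by
      rw [div_le_div_iff₀ hm.1 hδ]
      linarith
    calc _ ≤ 8 / (1 - maximizer σ t) + (σ + 3 / 2) / (1 - maximizer σ t) := by gcongr
      _ = _ := by ring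
  rw [hd, hq]
  constructor
  · calc _ = B ^ (-(σ + 3 / 2)⁻¹) * t ^ (σ + 3 / 2)⁻¹ / ((σ + 19 / 2) * t) := by field_simp
      _ ≤ (1 - maximizer σ t) / ((σ + 19 / 2) * t) := by gcongr
      _ = ((σ + 19 / 2) / (1 - maximizer σ t) * t)⁻¹ := by field_simp
      _ ≤ d⁻¹ := by gcongr
  · calc d⁻¹ ≤ ((σ + 3 / 2) / (1 - maximizer σ t) * t)⁻¹ := by gcongr
      _ = (1 - maximizer σ t) / ((σ + 3 / 2) * t) := by field_simp
      _ ≤ A ^ (-(σ + 3 / 2)⁻¹) * t ^ (σ + 3 / 2)⁻¹ / ((σ + 3 / 2) * t) := by gcongr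
      _ = _ := by field_simp

/-- There are α-independent constants `c₃* > 0`, `c₄ > c₃ > 0`, where `c₃*` satisfies
`G'(ε) ≤ −c₃* ε^{−4} α^{4+σ}` on `(0, α/√2]`, such that with `s₀ = 2 c₃* α^σ` one has
`c₃ α^{3/(3+2σ)} s^{−(1+2σ)/(3+2σ)} ≤ 𝒢''(s) ≤ c₄ α^{3/(3+2σ)} s^{−(1+2σ)/(3+2σ)}`
for all `s ∈ (0, s₀]`. -/
theorem stmt_15 (σ : ℝ) (hσ : σ ∈ Set.Ioo (0:ℝ) (3/2)) :
    ∃ c₃' c₃ c₄ : ℝ, 0 < c₃' ∧ 0 < c₃ ∧ c₃ < c₄ ∧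
      (∀ α : ℝ, 0 < α → ∀ ε ∈ Set.Ioc (0:ℝ) (α / Real.sqrt 2),
        GderivFun σ α ε ≤ -(c₃' * ε ^ (-(4:ℝ)) * α ^ (4 + σ))) ∧
      (∀ α : ℝ, 0 < α → ∀ s ∈ Set.Ioc (0:ℝ) (2 * c₃' * α ^ σ),
        c₃ * α ^ ((3:ℝ) / (3 + 2 * σ)) * s ^ (-((1 + 2 * σ) / (3 + 2 * σ)))
          ≤ deriv (deriv (calG σ α)) s ∧
        deriv (deriv (calG σ α)) s
          ≤ c₄ * α ^ ((3:ℝ) / (3 + 2 * σ)) * s ^ (-((1 + 2 * σ) / (3 + 2 * σ)))) := by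
  have hσ0 : 0 < σ := hσ.1
  have hc := rateConst_pos hσ0
  have hA0 : 0 < (σ + 1) * regularFactor σ 0 := by
    have := regularFactor_zero_pos hσ0
    positivity
  have hB0 : 0 < 16 * (σ + 1) * regularFactor σ 1 := by
    have := regularFactor_pos hσ0 zero_le_one
    positivity
  have hbounds := fun {t : ℝ} => deriv_deriv_calG_one_bounds (t := t) hσ0
  set c := (16 * (σ + 1) * regularFactor σ 1) ^ (-(σ + 3 / 2)⁻¹) / (σ + 19 / 2)
  set C := ((σ + 1) * regularFactor σ 0) ^ (-(σ + 3 / 2)⁻¹) / (σ + 3 / 2)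
  have hc0 : 0 < c := by positivity
  have hC0 : 0 < C := by positivity
  refine ⟨rateConst σ, c, c + C, hc, hc0, by linarith, ?_, ?_⟩
  · intro α hα ε hε
    have hsqrt : (4:ℝ) / 3 ≤ √2 := Real.le_sqrt_of_sq_le (by norm_num)
    have hε0 := hε.1
    have hmem : ε / α ∈ Ioc (0:ℝ) (3 / 4) := by
      refine ⟨by positivity, ?_⟩
      rw [div_le_iff₀ hα]
      refine hε.2.trans ?_
      rw [div_le_iff₀ (by positivity)]
      nlinarith
    rw [GderivFun_scaling hα, GderivFun_eq_neg_descentRate hσ0 ⟨hmem.1, by linarith [hmem.2]⟩,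
      mul_neg, neg_le_neg_iff]
    calc _ = α ^ σ * (rateConst σ * ((ε / α) ^ 4)⁻¹) := by
          rw [Real.rpow_neg hε0.le, Real.rpow_add hα]
          norm_cast
          field_simp
      _ ≤ _ := by
        gcongr
        exact rateConst_le_descentRate hσ0 hmem
  · intro α hα s hs
    have hs0 := hs.1
    have hα0 : 0 < α ^ (-σ) := by positivity
    have hmem : α ^ (-σ) * s ∈ Ioc 0 (2 * rateConst σ) := by
      refine ⟨by positivity, ?_⟩
      rw [Real.rpow_neg hα.le, inv_mul_le_iff₀ (by positivity)]
      linarith [hs.2]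
    obtain ⟨h1, h2⟩ := hbounds hmem
    have hpow : ∀ k : ℝ, k * α ^ ((3:ℝ) / (3 + 2 * σ)) * s ^ (-((1 + 2 * σ) / (3 + 2 * σ))) =
        α ^ (1 - σ) * (k * (α ^ (-σ) * s) ^ (-((1 + 2 * σ) / (3 + 2 * σ)))) := by
      intro k
      have hexp : (3:ℝ) / (3 + 2 * σ) = 1 - σ + -σ * -((1 + 2 * σ) / (3 + 2 * σ)) := by
        field_simp
        ring
      rw [Real.mul_rpow hα0.le hs0.le, ← Real.rpow_mul hα.le, hexp, Real.rpow_add hα]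
      ring
    rw [deriv_deriv_calG_scaling hα, hpow, hpow]
    refine ⟨by gcongr, ?_⟩
    gcongr
    refine h2.trans ?_
    gcongr
    linarith
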